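/- In the tadpole graph with cycle of k vertices and pendant path, let v be the path endpoint farthest from the cycle and u its neighbor. Then for a vertex u' on the path at distance l from v, the hitting time from u' to v equals l·h_{uv} - l(l-1), where h_{uv} is the hitting time from u to v. -/

import Mathlib

open scoped Classical

/-- Transition probability of the simple random walk on `G`. -/
noncomputable def stepProb {V : Type*} [Fintype V] (G : SimpleGraph V) (a b : V) : ℝ :=
  if G.Adj a b then 1 / (G.degree a) else 0

/-- Probability that the simple random walk started at `u` follows the step sequence `w`. -/
noncomputable def walkProb {V : Type*} [Fintype V] (G : SimpleGraph V) :
    (u : V) → {n : ℕ} → (Fin n → V) → ℝ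
  | _, 0, _ => 1
  | u, n + 1, w => stepProb G u (w 0) * walkProb G (w 0) (fun i : Fin n => w i.succ)

/-- Probability that the walk started at `u` first reaches `v` at time exactly `n` (for `n ≥ 1`). -/
noncomputable def firstHitProb {V : Type*} [Fintype V] (G : SimpleGraph V) (u v : V) (n : ℕ) : ℝ :=
  ∑ w ∈ Finset.univ.filter (fun w : Fin n → V =>
      (∀ i : Fin n, (i : ℕ) + 1 < n → w i ≠ v) ∧ ∀ i : Fin n, (i : ℕ) + 1 = n → w i = v),
    walkProb G u w

/-- Expected hitting time of `v` for the simple random walk on `G` started at `u`. -/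
noncomputable def hittingTime {V : Type*} [Fintype V] (G : SimpleGraph V) (u v : V) : ℝ :=
  if u = v then 0 else ∑' n : ℕ, (n : ℝ) * firstHitProb G u v n

/-- Expected first return time to `v` of the simple random walk on `G` started at `v`. -/
noncomputable def expectedReturnTime {V : Type*} [Fintype V] (G : SimpleGraph V) (v : V) : ℝ :=
  ∑' n : ℕ, (n : ℝ) * firstHitProb G v v n
/-- The tadpole graph: a cycle on `k` vertices (`Sum.inl`) together with a pendant path
on `l` additional vertices (`Sum.inr`), attached to cycle vertex `0`; path vertex `j` is at
distance `j + 1` from the cycle, so `Sum.inr ⟨l-1,_⟩` is the far endpoint of the path. -/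
def tadpole (k l : ℕ) : SimpleGraph (Fin k ⊕ Fin l) :=
  SimpleGraph.fromRel (fun x y =>
    match x, y with
    | Sum.inl i, Sum.inl j => ((i : ℕ) + 1) % k = (j : ℕ)
    | Sum.inl i, Sum.inr j => (i : ℕ) = 0 ∧ (j : ℕ) = 0
    | Sum.inr i, Sum.inr j => (i : ℕ) + 1 = (j : ℕ)
    | Sum.inr _, Sum.inl _ => False)

/-! Let `τ` be the hitting time of `v` in a connected graph with `N` vertices. The function
`N ^ N - N ^ (N - dist a v)` decreases on average by at least `1` at each step taken outside `v`:
a step towards `v` multiplies `N ^ (N - dist a v)` by `N`, which exceeds the degree, so the single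
neighbour closer to `v` already outweighs all the others. It therefore bounds `∑ P(τ > n)`, and
summation by parts gives `E[τ] = ∑ P(τ > n)`. Conditioning on the first step turns this into
`h(a) = 1 + E[h(b)]`, with `b` a uniform neighbour of `a ≠ v`. Along a pendant path ending at `v`
this says that `h` has constant second difference `-2`, and `h(v) = 0`. -/

open Filter Topology

section Sequences

lemma tendsto_nat_mul_zero_of_antitone {s : ℕ → ℝ} (hanti : Antitone s) (hs : Summable s) :
    Tendsto (fun n : ℕ => n * s n) atTop (𝓝 0) := by
  have s_nonneg : ∀ n, 0 ≤ s n := hanti.le_of_tendsto hs.tendsto_atTop_zero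
  have le_tail (n : ℕ) : n * s n ≤ 2 * ∑' i, s (i + n / 2) :=
    calc n * s n ≤ 2 * ((n - n / 2 : ℕ) * s n) := by
          have : (n : ℝ) ≤ 2 * (n - n / 2 : ℕ) := by norm_cast; omega
          nlinarith [s_nonneg n]
      _ = 2 * ∑ _i ∈ Finset.range (n - n / 2), s n := by simp
      _ ≤ 2 * ∑ i ∈ Finset.range (n - n / 2), s (i + n / 2) := by
          gcongr with i hi
          exact hanti (by have := Finset.mem_range.1 hi; omega)
      _ ≤ 2 * ∑' i, s (i + n / 2) := by
          gcongr
          exact ((summable_nat_add_iff _).2 hs).sum_le_tsum _ fun i _ => s_nonneg _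
  have tail_tendsto : Tendsto (fun n => 2 * ∑' i, s (i + n / 2)) atTop (𝓝 0) := by
    simpa using ((tendsto_sum_nat_add s).comp
      (Nat.tendsto_div_const_atTop two_ne_zero)).const_mul 2
  exact squeeze_zero (fun n => mul_nonneg n.cast_nonneg (s_nonneg n)) le_tail tail_tendsto

lemma hasSum_succ_mul_sub_of_antitone {s : ℕ → ℝ} (hanti : Antitone s) (hs : Summable s) :
    HasSum (fun n : ℕ => (n + 1) * (s n - s (n + 1))) (∑' n, s n) := by
  have sum_by_parts (N : ℕ) : ∑ n ∈ Finset.range N, ((n : ℝ) + 1) * (s n - s (n + 1)) =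
      ∑ n ∈ Finset.range N, s n - N * s N := by
    induction N with
    | zero => simp
    | succ N ih => rw [Finset.sum_range_succ, ih, Finset.sum_range_succ]; push_cast; ring
  rw [hasSum_iff_tendsto_nat_of_nonneg fun n =>
    mul_nonneg (by positivity) (sub_nonneg.2 (hanti n.le_succ))]
  simp_rw [sum_by_parts]
  simpa using hs.tendsto_sum_tsum_nat.sub (tendsto_nat_mul_zero_of_antitone hanti hs)

lemma eq_quadratic_of_eq_one_add_average {x : ℕ → ℝ} {L : ℕ} (h0 : x 0 = 0)
    (hx : ∀ i, i + 1 < L → x (i + 1) = 1 + (x i + x (i + 2)) / 2) {m : ℕ} (hm : m ≤ L) :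
    x m = m * x 1 - m * (m - 1) := by
  induction m using Nat.twoStepInduction with
  | zero => simp [h0]
  | one => simp
  | more m ih₀ ih₁ =>
    have step := hx m hm
    rw [ih₀ (by omega), ih₁ (by omega)] at step
    push_cast at step ⊢
    linarith

end Sequences

section Distance

variable {V : Type*} {G : SimpleGraph V}

lemma exists_adj_dist_lt (hG : G.Connected) {a v : V} (ha : a ≠ v) :
    ∃ b, G.Adj a b ∧ G.dist b v < G.dist a v := by
  obtain ⟨p, hp⟩ := hG.exists_walk_length_eq_dist a v
  cases p with
  | nil => exact absurd rfl ha
  | cons hadj q =>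
    rw [SimpleGraph.Walk.length_cons] at hp
    exact ⟨_, hadj, by have := SimpleGraph.dist_le q; omega⟩

lemma dist_lt_card [Fintype V] (hG : G.Connected) (a v : V) : G.dist a v < Fintype.card V := by
  obtain ⟨p, hp, hlength⟩ := hG.exists_path_of_dist a v
  exact hlength ▸ hp.length_lt

end Distance

section RandomWalk

variable {V : Type*} [Fintype V] {G : SimpleGraph V}

lemma stepProb_nonneg (a b : V) : 0 ≤ stepProb G a b := by
  unfold stepProb
  positivity

lemma sum_stepProb_mul (a : V) (φ : V → ℝ) :
    ∑ b, stepProb G a b * φ b = (∑ b ∈ G.neighborFinset a, φ b) / G.degree a := by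
  simp [stepProb, ite_mul, ← Finset.sum_filter, G.neighborFinset_eq_filter, div_eq_inv_mul,
    Finset.mul_sum]

lemma sum_stepProb {a : V} (ha : 0 < G.degree a) : ∑ b, stepProb G a b = 1 := by
  simpa [ha.ne'] using sum_stepProb_mul (G := G) a fun _ => 1

lemma sum_stepProb_mul_of_adj_iff {a x y : V} (h : ∀ b, G.Adj a b ↔ b = x ∨ b = y) (hxy : x ≠ y)
    (φ : V → ℝ) : ∑ b, stepProb G a b * φ b = (φ x + φ y) / 2 := by
  have neighbors : G.neighborFinset a = {x, y} := by ext b; simp [h]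
  rw [sum_stepProb_mul, ← G.card_neighborFinset_eq_degree, neighbors, Finset.sum_pair hxy,
    Finset.card_pair hxy, Nat.cast_ofNat]

lemma walkProb_nonneg (a : V) {n : ℕ} (w : Fin n → V) : 0 ≤ walkProb G a w := by
  induction n generalizing a with
  | zero => exact zero_le_one
  | succ n ih => exact mul_nonneg (stepProb_nonneg a _) (ih _ _)

lemma firstHitProb_nonneg (a v : V) (n : ℕ) : 0 ≤ firstHitProb G a v n :=
  Finset.sum_nonneg fun w _ => walkProb_nonneg a w

lemma firstHitProb_one (a v : V) : firstHitProb G a v 1 = stepProb G a v := by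
  have walks : Finset.univ.filter (fun w : Fin 1 → V =>
      (∀ i : Fin 1, (i : ℕ) + 1 < 1 → w i ≠ v) ∧ ∀ i : Fin 1, (i : ℕ) + 1 = 1 → w i = v) =
      {fun _ => v} := by
    ext w
    simp [funext_iff]
  rw [firstHitProb, walks, Finset.sum_singleton]
  simp [walkProb]

lemma firstHitProb_add_two (a v : V) (n : ℕ) :
    firstHitProb G a v (n + 2) =
      ∑ b, stepProb G a b * if b = v then 0 else firstHitProb G b v (n + 1) := by
  unfold firstHitProb
  rw [Finset.sum_filter, ← (Fin.consEquiv fun _ : Fin (n + 2) => V).sum_comp,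
    Fintype.sum_prod_type]
  refine Finset.sum_congr rfl fun b _ => ?_
  split_ifs with hb
  · simp [Fin.consEquiv, Fin.forall_fin_succ (n := n + 1), hb]
  · simp [Fin.consEquiv, Fin.forall_fin_succ (n := n + 1), hb, Finset.sum_filter, Finset.mul_sum,
      walkProb]

/-- The probability that the walk started at `a` does not visit `v` at any of the times
`1, …, n`. It is encoded as a complementary probability, so that its decrements are the
first-hitting probabilities. -/
noncomputable def survivalProb (G : SimpleGraph V) (a v : V) (n : ℕ) : ℝ :=
  1 - ∑ i ∈ Finset.range n, firstHitProb G a v (i + 1)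

lemma survivalProb_zero (a v : V) : survivalProb G a v 0 = 1 := by
  simp [survivalProb]

lemma survivalProb_succ_eq_sub (a v : V) (n : ℕ) :
    survivalProb G a v (n + 1) = survivalProb G a v n - firstHitProb G a v (n + 1) := by
  rw [survivalProb, Finset.sum_range_succ, ← sub_sub, survivalProb]

lemma survivalProb_antitone (a v : V) : Antitone (survivalProb G a v) :=
  antitone_nat_of_succ_le fun n => by
    rw [survivalProb_succ_eq_sub]
    exact sub_le_self _ (firstHitProb_nonneg a v _)

lemma survivalProb_succ {a : V} (ha : 0 < G.degree a) (v : V) (n : ℕ) :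
    survivalProb G a v (n + 1) =
      ∑ b, stepProb G a b * if b = v then 0 else survivalProb G b v n := by
  induction n with
  | zero =>
    simp only [survivalProb_zero, mul_ite, mul_zero, mul_one]
    rw [survivalProb_succ_eq_sub, firstHitProb_one, survivalProb_zero, ← sum_stepProb ha,
      ← Finset.sum_erase_eq_sub (Finset.mem_univ v), ← Finset.filter_ne', Finset.sum_filter]
    simp only [ne_eq, ite_not]
  | succ n ih =>
    rw [survivalProb_succ_eq_sub, firstHitProb_add_two, ih, ← Finset.sum_sub_distrib]
    refine Finset.sum_congr rfl fun b _ => ?_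
    rw [survivalProb_succ_eq_sub]
    split_ifs <;> ring

lemma survivalProb_nonneg (hdeg : ∀ a, 0 < G.degree a) (a v : V) (n : ℕ) :
    0 ≤ survivalProb G a v n := by
  induction n generalizing a with
  | zero => simp [survivalProb_zero]
  | succ n ih =>
    rw [survivalProb_succ (hdeg a)]
    refine Finset.sum_nonneg fun b _ => mul_nonneg (stepProb_nonneg a b) ?_
    split_ifs
    exacts [le_rfl, ih b]

lemma sum_survivalProb_le (hdeg : ∀ a, 0 < G.degree a) {v : V} {g : V → ℝ} (hg₀ : ∀ a, 0 ≤ g a)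
    (hg : ∀ a ≠ v, 1 + ∑ b, stepProb G a b * g b ≤ g a) {a : V} (ha : a ≠ v) (N : ℕ) :
    ∑ n ∈ Finset.range N, survivalProb G a v n ≤ g a := by
  induction N generalizing a with
  | zero => simpa using hg₀ a
  | succ N ih =>
    refine le_trans ?_ (hg a ha)
    rw [Finset.sum_range_succ', survivalProb_zero, add_comm]
    simp_rw [survivalProb_succ (hdeg a)]
    rw [Finset.sum_comm]
    gcongr with b
    rw [← Finset.mul_sum]
    refine mul_le_mul_of_nonneg_left ?_ (stepProb_nonneg a b)
    split_ifs with hb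
    · simpa using hg₀ b
    · exact ih hb

lemma pow_add_one_le_sum_stepProb_mul_pow (hG : G.Connected) {a v : V} (ha : a ≠ v) :
    (Fintype.card V : ℝ) ^ (Fintype.card V - G.dist a v) + 1 ≤
      ∑ b, stepProb G a b * (Fintype.card V : ℝ) ^ (Fintype.card V - G.dist b v) := by
  obtain ⟨c, hac, hdist⟩ := exists_adj_dist_lt hG ha
  have dist_lt := dist_lt_card hG a v
  set N := Fintype.card V
  set w : V → ℝ := fun b => (N : ℝ) ^ (N - G.dist b v)
  have one_le_N : (1 : ℝ) ≤ N := by norm_cast; omega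
  have degree_pos : (0 : ℝ) < G.degree a := mod_cast (G.degree_pos_iff_exists_adj a).2 ⟨c, hac⟩
  have degree_lt : (G.degree a : ℝ) + 1 ≤ N := mod_cast G.degree_lt_card_verts a
  have N_le : (N : ℝ) ≤ w a := le_self_pow₀ one_le_N (by omega)
  have mul_le : N * w a ≤ w c := by
    rw [← pow_succ']
    exact pow_le_pow_right₀ one_le_N (by omega)
  calc w a + 1 ≤ w c / G.degree a := by
        rw [le_div_iff₀ degree_pos]
        nlinarith
    _ = stepProb G a c * w c := by rw [stepProb, if_pos hac]; ring
    _ ≤ ∑ b, stepProb G a b * w b :=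
        Finset.single_le_sum (f := fun b => stepProb G a b * w b)
          (fun b _ => mul_nonneg (stepProb_nonneg a b) (by positivity)) (Finset.mem_univ c)

lemma summable_survivalProb (hG : G.Connected) {a v : V} (ha : a ≠ v) :
    Summable (survivalProb G a v) := by
  have : Nontrivial V := ⟨a, v, ha⟩
  have hdeg (b : V) : 0 < G.degree b := hG.preconnected.degree_pos_of_nontrivial b
  set N := Fintype.card V
  let w : V → ℝ := fun b => (N : ℝ) ^ (N - G.dist b v)
  have w_le (b : V) : w b ≤ (N : ℝ) ^ N :=
    pow_le_pow_right₀ (mod_cast Fintype.card_pos) (Nat.sub_le _ _)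
  refine summable_of_sum_range_le (survivalProb_nonneg hdeg a v)
    (sum_survivalProb_le hdeg (g := fun b => (N : ℝ) ^ N - w b) (fun b => sub_nonneg.2 (w_le b))
      (fun b hb => ?_) ha)
  have drift : w b + 1 ≤ ∑ c, stepProb G b c * w c := pow_add_one_le_sum_stepProb_mul_pow hG hb
  simp_rw [mul_sub]
  rw [Finset.sum_sub_distrib, ← Finset.sum_mul, sum_stepProb (hdeg b)]
  linarith

lemma hittingTime_self (v : V) : hittingTime G v v = 0 :=
  if_pos rfl

lemma hasSum_survivalProb (hG : G.Connected) {a v : V} (ha : a ≠ v) :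
    HasSum (survivalProb G a v) (hittingTime G a v) := by
  have hs := summable_survivalProb hG ha
  have shifted := hasSum_succ_mul_sub_of_antitone (survivalProb_antitone a v) hs
  simp only [survivalProb_succ_eq_sub, sub_sub_cancel] at shifted
  have unshifted : HasSum (fun n : ℕ => n * firstHitProb G a v n) (∑' n, survivalProb G a v n) := by
    rw [← hasSum_nat_add_iff' 1]
    simpa using shifted
  rw [hittingTime, if_neg ha, unshifted.tsum_eq]
  exact hs.hasSum

lemma hittingTime_eq_one_add (hG : G.Connected) {a v : V} (ha : a ≠ v) :
    hittingTime G a v = 1 + ∑ b, stepProb G a b * hittingTime G b v := by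
  have : Nontrivial V := ⟨a, v, ha⟩
  have after_first_step (b : V) :
      HasSum (fun n => stepProb G a b * if b = v then 0 else survivalProb G b v n)
        (stepProb G a b * hittingTime G b v) := by
    refine HasSum.mul_left _ ?_
    split_ifs with hb
    · simp [hb, hittingTime_self, hasSum_zero]
    · exact hasSum_survivalProb hG hb
  have shifted := (hasSum_nat_add_iff' 1).2 (hasSum_survivalProb hG ha)
  simp only [Finset.sum_range_one, survivalProb_zero,
    survivalProb_succ (hG.preconnected.degree_pos_of_nontrivial a)] at shifted
  linarith [shifted.unique (hasSum_sum fun b _ => after_first_step b)]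

/-- `p 0, …, p L` is a pendant path of `G` with free end `p 0`: the vertices are distinct, and
those before `p L` have no neighbours except their neighbours along the path. Nothing is required of
`p L` beyond this, nor of the values `p i` with `L < i`. -/
structure IsPendantPath {V : Type*} (G : SimpleGraph V) (p : ℕ → V) (L : ℕ) : Prop where
  injOn : Set.InjOn p (Set.Iic L)
  adj_iff : ∀ {i : ℕ}, i < L → ∀ b, G.Adj (p i) b ↔ ∃ j, (i + 1 = j ∨ j + 1 = i) ∧ p j = b

lemma IsPendantPath.hittingTime_succ {p : ℕ → V} {L i : ℕ} (hp : IsPendantPath G p L)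
    (hG : G.Connected) (hi : i + 1 < L) :
    hittingTime G (p (i + 1)) (p 0) =
      1 + (hittingTime G (p i) (p 0) + hittingTime G (p (i + 2)) (p 0)) / 2 := by
  have ne_end : p (i + 1) ≠ p 0 := hp.injOn.ne hi.le L.zero_le i.succ_ne_zero
  have neighbors_ne : p i ≠ p (i + 2) := hp.injOn.ne (by simp; omega) hi (by omega)
  have adj_iff (b : V) : G.Adj (p (i + 1)) b ↔ b = p i ∨ b = p (i + 2) := by
    rw [hp.adj_iff hi]
    grind
  rw [hittingTime_eq_one_add hG ne_end, sum_stepProb_mul_of_adj_iff adj_iff neighbors_ne]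

theorem stmt_8_general {p : ℕ → V} {L : ℕ} (hG : G.Connected) (hp : IsPendantPath G p L)
    {u : V} (hu : G.Adj u (p 0)) {m : ℕ} (hm : m ≤ L) :
    hittingTime G (p m) (p 0) = m * hittingTime G u (p 0) - m * (m - 1 : ℝ) := by
  obtain rfl | hm₀ := m.eq_zero_or_pos
  · simp [hittingTime_self]
  have u_eq : p 1 = u := by simpa using (hp.adj_iff (hm₀.trans_le hm) u).1 hu.symm
  rw [← u_eq]
  exact eq_quadratic_of_eq_one_add_average (x := fun i => hittingTime G (p i) (p 0))
    (hittingTime_self _) (fun i hi => hp.hittingTime_succ hG hi) hm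

end RandomWalk

section Tadpole

variable {k l : ℕ}

lemma tadpole_adj_inl_inl_succ {i : ℕ} (hi : i + 1 < k) :
    (tadpole k l).Adj (Sum.inl ⟨i, by omega⟩) (Sum.inl ⟨i + 1, hi⟩) := by
  simp [tadpole, Nat.mod_eq_of_lt hi]

lemma tadpole_adj_inl_inr {i : Fin k} {j : Fin l} :
    (tadpole k l).Adj (Sum.inl i) (Sum.inr j) ↔ (i : ℕ) = 0 ∧ (j : ℕ) = 0 := by
  simp [tadpole]

lemma tadpole_adj_inr_inr {i j : Fin l} :
    (tadpole k l).Adj (Sum.inr i) (Sum.inr j) ↔ (i : ℕ) + 1 = j ∨ (j : ℕ) + 1 = i := by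
  simp only [tadpole, SimpleGraph.fromRel_adj, ne_eq, Sum.inr.injEq, Fin.ext_iff]
  omega

lemma tadpole_connected (hk : 0 < k) : (tadpole k l).Connected := by
  refine SimpleGraph.connected_iff_exists_forall_reachable _ |>.2 ⟨Sum.inl ⟨0, hk⟩, ?_⟩
  rintro (⟨i, hi⟩ | ⟨j, hj⟩)
  · induction i with
    | zero => rfl
    | succ i ih => exact (ih (by omega)).trans (tadpole_adj_inl_inl_succ hi).reachable
  · induction j with
    | zero => exact (tadpole_adj_inl_inr.2 ⟨rfl, rfl⟩).reachable
    | succ j ih => exact (ih (by omega)).trans (tadpole_adj_inr_inr.2 (Or.inl rfl)).reachable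

lemma isPendantPath_tadpole (hl : 1 ≤ l) :
    IsPendantPath (tadpole k l) (fun i => Sum.inr ⟨l - 1 - i, by omega⟩) (l - 1) where
  injOn i hi j hj hij := by
    simp only [Set.mem_Iic, Sum.inr.injEq, Fin.mk.injEq] at hi hj hij
    omega
  adj_iff {i} hi b := by
    rcases b with c | j
    · simp only [(tadpole k l).adj_comm _ (Sum.inl c), tadpole_adj_inl_inr, reduceCtorEq, and_false,
        exists_false, iff_false]
      omega
    · simp only [tadpole_adj_inr_inr, Sum.inr.injEq, Fin.ext_iff]
      constructor
      · exact fun h => ⟨l - 1 - j, by omega, by omega⟩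
      · rintro ⟨n, hn, hnj⟩
        omega

end Tadpole

theorem stmt_8 (k l : ℕ) (hk : 3 ≤ k) (hl : 1 ≤ l)
    (v : Fin k ⊕ Fin l) (hv : v = Sum.inr ⟨l - 1, by omega⟩)
    (u : Fin k ⊕ Fin l) (hu : (tadpole k l).Adj u v)
    (m : ℕ) (hm : m ≤ l - 1) :
    hittingTime (tadpole k l) (Sum.inr ⟨l - 1 - m, by omega⟩) v =
      m * hittingTime (tadpole k l) u v - m * (m - 1 : ℝ) := by
  subst hv
  exact stmt_8_general (tadpole_connected (by omega)) (isPendantPath_tadpole hl) hu hm
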